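/- Let P be a joint distribution on 𝒳 × 𝒴 × 𝒵 whose X-marginal p has full support (p(x) = Σ_{y,z} P(x,y,z) > 0 for all x), and let κ(x;y) = P(X=x,Y=y)/p(x) and μ(x;z) = P(X=x,Z=z)/p(x) be the conditional distributions of Y and Z given X. For a finite type 𝒜 and a reward function u : 𝒳 × 𝒜 → ℝ, define R(κ,p,u) = Σ_{y∈𝒴} max_{a∈𝒜} Σ_{x∈𝒳} p(x)·κ(x;y)·u(x,a), and analogously R(μ,p,u) with μ and sums over z ∈ 𝒵. Then ŨI(X:Z∖Y) = 0 if and only if for every finite type 𝒜 and every u : 𝒳 × 𝒜 → ℝ one has R(κ,p,u) ≥ R(μ,p,u). -/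

import Mathlib

/-!
The equivalence passes through a third condition, `Garbled P`: `μ` is obtained from `κ` by
post-composition with a stochastic matrix `g` from `𝒴` to `𝒵`.

`ŨI = 0` iff `Garbled P`. Conditional mutual information is nonnegative because
`log t ≥ 1 - 1 / t` (`miXZ_Y_nonneg`), and it vanishes only when
`Q(x,y,z) Q(y) = Q(x,y) Q(y,z)` (`eq_of_miXZ_Y_eq_zero`). The set `Δ_P` is compact and the mutual
information is continuous on it, so `ŨI = 0` yields a `Q ∈ Δ_P` with `X → Y → Z` Markov, whose
conditional law of `Z` given `Y` is the garbling. Conversely a garbling defines such a Markov chain.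

`Garbled P` iff all rewards are ordered (Blackwell). A garbling cannot increase rewards, since a
maximum of averages is at most the average of the maxima. For the converse
(`garbled_of_reward_le`), the set of all garblings of `κ` is compact and convex; if it missed `μ`,
a separating hyperplane would be a reward function with action set `𝒵` for which `μ` does strictly
better than every garbling of `κ`, in particular the one choosing an optimal action for each `y`.
-/

open scoped BigOperators
open Real

namespace PID

variable {𝒳 𝒴 𝒵 : Type*} [Fintype 𝒳] [Fintype 𝒴] [Fintype 𝒵]

/-- A joint distribution on `𝒳 × 𝒴 × 𝒵`: nonnegative values summing to 1. -/
def IsDist (P : 𝒳 × 𝒴 × 𝒵 → ℝ) : Prop :=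
  (∀ p, 0 ≤ P p) ∧ ∑ p, P p = 1

noncomputable def margX (P : 𝒳 × 𝒴 × 𝒵 → ℝ) (x : 𝒳) : ℝ := ∑ y, ∑ z, P (x, y, z)
noncomputable def margY (P : 𝒳 × 𝒴 × 𝒵 → ℝ) (y : 𝒴) : ℝ := ∑ x, ∑ z, P (x, y, z)
noncomputable def margZ (P : 𝒳 × 𝒴 × 𝒵 → ℝ) (z : 𝒵) : ℝ := ∑ x, ∑ y, P (x, y, z)
noncomputable def margXY (P : 𝒳 × 𝒴 × 𝒵 → ℝ) (x : 𝒳) (y : 𝒴) : ℝ := ∑ z, P (x, y, z)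
noncomputable def margXZ (P : 𝒳 × 𝒴 × 𝒵 → ℝ) (x : 𝒳) (z : 𝒵) : ℝ := ∑ y, P (x, y, z)
noncomputable def margYZ (P : 𝒳 × 𝒴 × 𝒵 → ℝ) (y : 𝒴) (z : 𝒵) : ℝ := ∑ x, P (x, y, z)

/-- Mutual information `MI(X:Y)`. -/
noncomputable def miXY (P : 𝒳 × 𝒴 × 𝒵 → ℝ) : ℝ :=
  ∑ x, ∑ y, margXY P x y * Real.log (margXY P x y / (margX P x * margY P y))

/-- Mutual information `MI(X:Z)`. -/
noncomputable def miXZ (P : 𝒳 × 𝒴 × 𝒵 → ℝ) : ℝ :=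
  ∑ x, ∑ z, margXZ P x z * Real.log (margXZ P x z / (margX P x * margZ P z))

/-- Mutual information `MI(Y:Z)`. -/
noncomputable def miYZ (P : 𝒳 × 𝒴 × 𝒵 → ℝ) : ℝ :=
  ∑ y, ∑ z, margYZ P y z * Real.log (margYZ P y z / (margY P y * margZ P z))

/-- Mutual information `MI(X:(Y,Z))`. -/
noncomputable def miXYZ (P : 𝒳 × 𝒴 × 𝒵 → ℝ) : ℝ :=
  ∑ x, ∑ y, ∑ z, P (x, y, z) * Real.log (P (x, y, z) / (margX P x * margYZ P y z))

/-- Conditional mutual information `MI(X:Y|Z)`. -/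
noncomputable def miXY_Z (P : 𝒳 × 𝒴 × 𝒵 → ℝ) : ℝ :=
  ∑ x, ∑ y, ∑ z, P (x, y, z) *
    Real.log (P (x, y, z) * margZ P z / (margXZ P x z * margYZ P y z))

/-- Conditional mutual information `MI(X:Z|Y)`. -/
noncomputable def miXZ_Y (P : 𝒳 × 𝒴 × 𝒵 → ℝ) : ℝ :=
  ∑ x, ∑ y, ∑ z, P (x, y, z) *
    Real.log (P (x, y, z) * margY P y / (margXY P x y * margYZ P y z))

/-- Conditional mutual information `MI(Y:Z|X)`. -/
noncomputable def miYZ_X (P : 𝒳 × 𝒴 × 𝒵 → ℝ) : ℝ :=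
  ∑ x, ∑ y, ∑ z, P (x, y, z) *
    Real.log (P (x, y, z) * margX P x / (margXY P x y * margXZ P x z))

/-- Conditional entropy `H(X|Y,Z)`. -/
noncomputable def hX_YZ (P : 𝒳 × 𝒴 × 𝒵 → ℝ) : ℝ :=
  -∑ x, ∑ y, ∑ z, P (x, y, z) * Real.log (P (x, y, z) / margYZ P y z)

/-- Conditional entropy `H(X|Z)`. -/
noncomputable def hX_Z (P : 𝒳 × 𝒴 × 𝒵 → ℝ) : ℝ :=
  -∑ x, ∑ z, margXZ P x z * Real.log (margXZ P x z / margZ P z)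

/-- Conditional entropy `H(Y|Z)`. -/
noncomputable def hY_Z (P : 𝒳 × 𝒴 × 𝒵 → ℝ) : ℝ :=
  -∑ y, ∑ z, margYZ P y z * Real.log (margYZ P y z / margZ P z)

/-- Conditional entropy `H(Z|Y)`. -/
noncomputable def hZ_Y (P : 𝒳 × 𝒴 × 𝒵 → ℝ) : ℝ :=
  -∑ y, ∑ z, margYZ P y z * Real.log (margYZ P y z / margY P y)

/-- Co-information `CoI(X;Y;Z) = MI(X:Y) − MI(X:Y|Z)`. -/
noncomputable def coI (P : 𝒳 × 𝒴 × 𝒵 → ℝ) : ℝ := miXY P - miXY_Z P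

/-- `Δ_P`: the joint distributions with the same pair marginals as `P` on `(X,Y)` and `(X,Z)`. -/
def ΔP (P : 𝒳 × 𝒴 × 𝒵 → ℝ) : Set (𝒳 × 𝒴 × 𝒵 → ℝ) :=
  {Q | IsDist Q ∧ (∀ x y, margXY Q x y = margXY P x y) ∧ ∀ x z, margXZ Q x z = margXZ P x z}

/-- `ŨI(X:Y∖Z) = min_{Q ∈ Δ_P} MI_Q(X:Y|Z)`. -/
noncomputable def UIY (P : 𝒳 × 𝒴 × 𝒵 → ℝ) : ℝ := sInf (miXY_Z '' ΔP P)

/-- `ŨI(X:Z∖Y) = min_{Q ∈ Δ_P} MI_Q(X:Z|Y)`. -/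
noncomputable def UIZ (P : 𝒳 × 𝒴 × 𝒵 → ℝ) : ℝ := sInf (miXZ_Y '' ΔP P)

/-- `S̃I(X:Y;Z) = max_{Q ∈ Δ_P} CoI_Q(X;Y;Z)`. -/
noncomputable def SI (P : 𝒳 × 𝒴 × 𝒵 → ℝ) : ℝ := sSup (coI '' ΔP P)

/-- `C̃I(X:Y;Z) = MI_P(X:(Y,Z)) − min_{Q ∈ Δ_P} MI_Q(X:(Y,Z))`. -/
noncomputable def CI (P : 𝒳 × 𝒴 × 𝒵 → ℝ) : ℝ := miXYZ P - sInf (miXYZ '' ΔP P)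

set_option linter.unusedSectionVars false

/-- The channel to `Z` is a garbling of the channel to `Y`: some stochastic matrix `g` from `𝒴` to
`𝒵` satisfies `μ = κ g`. The identity is written for the pair marginals, that is, with both sides
multiplied by the law of `X`. -/
def Garbled (P : 𝒳 × 𝒴 × 𝒵 → ℝ) : Prop :=
  ∃ g : 𝒴 → 𝒵 → ℝ, (∀ y z, 0 ≤ g y z) ∧ (∀ y, ∑ z, g y z = 1) ∧
    ∀ x z, margXZ P x z = ∑ y, margXY P x y * g y z

lemma margY_eq (P : 𝒳 × 𝒴 × 𝒵 → ℝ) (y : 𝒴) : margY P y = ∑ z, margYZ P y z := by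
  unfold margY margYZ
  exact Finset.sum_comm

lemma margXY_nonneg {P : 𝒳 × 𝒴 × 𝒵 → ℝ} (h : ∀ p, 0 ≤ P p) (x : 𝒳) (y : 𝒴) :
    0 ≤ margXY P x y := Finset.sum_nonneg fun _ _ => h _

lemma margYZ_nonneg {P : 𝒳 × 𝒴 × 𝒵 → ℝ} (h : ∀ p, 0 ≤ P p) (y : 𝒴) (z : 𝒵) :
    0 ≤ margYZ P y z := Finset.sum_nonneg fun _ _ => h _

lemma le_margXY {P : 𝒳 × 𝒴 × 𝒵 → ℝ} (h : ∀ p, 0 ≤ P p) (x : 𝒳) (y : 𝒴) (z : 𝒵) :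
    P (x, y, z) ≤ margXY P x y :=
  Finset.single_le_sum (f := fun z => P (x, y, z)) (fun _ _ => h _) (Finset.mem_univ z)

lemma le_margYZ {P : 𝒳 × 𝒴 × 𝒵 → ℝ} (h : ∀ p, 0 ≤ P p) (x : 𝒳) (y : 𝒴) (z : 𝒵) :
    P (x, y, z) ≤ margYZ P y z :=
  Finset.single_le_sum (f := fun x => P (x, y, z)) (fun _ _ => h _) (Finset.mem_univ x)

lemma margXY_le_margY {P : 𝒳 × 𝒴 × 𝒵 → ℝ} (h : ∀ p, 0 ≤ P p) (x : 𝒳) (y : 𝒴) :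
    margXY P x y ≤ margY P y :=
  Finset.single_le_sum (f := fun x => margXY P x y) (fun _ _ => margXY_nonneg h _ _)
    (Finset.mem_univ x)

lemma margY_nonneg {P : 𝒳 × 𝒴 × 𝒵 → ℝ} (h : ∀ p, 0 ≤ P p) (y : 𝒴) : 0 ≤ margY P y :=
  Finset.sum_nonneg fun _ _ => margXY_nonneg h _ _

/-! ### Nonnegativity of conditional mutual information and its equality case -/

/-- A single term of `MI(X:Z|Y)` is bounded below through `log t ≥ 1 - 1 / t`. -/
lemma term_ge {q m a b : ℝ} (hq : 0 ≤ q) (hqa : q ≤ a) (hqb : q ≤ b) (ham : a ≤ m) :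
    q - a * b / m ≤ q * Real.log (q * m / (a * b)) := by
  rcases hq.eq_or_lt with rfl | hq
  · have hm : 0 ≤ m := hqa.trans ham
    have : 0 ≤ a * b / m := by positivity
    simpa using this
  · have ha : 0 < a := by linarith
    have hb : 0 < b := by linarith
    have hm : 0 < m := by linarith
    have h := Real.one_sub_inv_le_log_of_pos (x := q * m / (a * b)) (by positivity)
    calc q - a * b / m = q * (1 - (q * m / (a * b))⁻¹) := by field_simp
      _ ≤ _ := mul_le_mul_of_nonneg_left h hq.le

lemma term_eq {q m a b : ℝ} (hq : 0 ≤ q) (hqa : q ≤ a) (hqb : q ≤ b) (ham : a ≤ m)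
    (h : q * Real.log (q * m / (a * b)) = q - a * b / m) : q = a * b / m := by
  rcases hq.eq_or_lt with rfl | hq
  · simp at h
    rcases h with (h | h) | h <;> simp [h]
  · have ha : 0 < a := by linarith
    have hb : 0 < b := by linarith
    have hm : 0 < m := by linarith
    by_contra hne
    have hr : (q * m / (a * b))⁻¹ ≠ 1 := by
      intro h1
      apply hne
      field_simp at h1 ⊢
      linarith
    have h2 := Real.log_lt_sub_one_of_pos (x := (q * m / (a * b))⁻¹) (by positivity) hr
    rw [Real.log_inv] at h2
    have h3 : q - a * b / m = q * (1 - (q * m / (a * b))⁻¹) := by field_simp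
    rw [h3] at h
    have := mul_left_cancel₀ hq.ne' h
    linarith

/-- The law under which `X` and `Z` are independent given `Y` has the same total mass as `Q`. -/
lemma sum_indep (Q : 𝒳 × 𝒴 × 𝒵 → ℝ) :
    ∑ x, ∑ y, ∑ z, margXY Q x y * margYZ Q y z / margY Q y = ∑ x, ∑ y, ∑ z, Q (x, y, z) := by
  rw [Finset.sum_comm]
  conv_rhs => rw [Finset.sum_comm]
  refine Finset.sum_congr rfl fun y _ => ?_
  have h1 : ∑ x, ∑ z, margXY Q x y * margYZ Q y z / margY Q y
      = (∑ x, margXY Q x y) * (∑ z, margYZ Q y z) / margY Q y := by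
    rw [Finset.sum_mul_sum, Finset.sum_div]
    exact Finset.sum_congr rfl fun x _ => by rw [Finset.sum_div]
  have h2 : ∑ x, margXY Q x y = margY Q y := rfl
  have h3 : ∑ x, ∑ z, Q (x, y, z) = margY Q y := rfl
  rw [h1, h2, h3, ← margY_eq, mul_self_div_self]

lemma miXZ_Y_nonneg {Q : 𝒳 × 𝒴 × 𝒵 → ℝ} (h : ∀ p, 0 ≤ Q p) : 0 ≤ miXZ_Y Q := by
  have h1 : ∑ x, ∑ y, ∑ z, (Q (x, y, z) - margXY Q x y * margYZ Q y z / margY Q y)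
      ≤ miXZ_Y Q :=
    Finset.sum_le_sum fun x _ => Finset.sum_le_sum fun y _ => Finset.sum_le_sum fun z _ =>
      term_ge (h _) (le_margXY h x y z) (le_margYZ h x y z) (margXY_le_margY h x y)
  simp only [Finset.sum_sub_distrib, sum_indep, sub_self] at h1
  exact h1

lemma eq_of_miXZ_Y_eq_zero {Q : 𝒳 × 𝒴 × 𝒵 → ℝ} (h : ∀ p, 0 ≤ Q p) (h0 : miXZ_Y Q = 0)
    (x : 𝒳) (y : 𝒴) (z : 𝒵) : Q (x, y, z) = margXY Q x y * margYZ Q y z / margY Q y := by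
  have hle : ∀ x y z, 0 ≤ Q (x, y, z) * Real.log (Q (x, y, z) * margY Q y /
      (margXY Q x y * margYZ Q y z)) - (Q (x, y, z) - margXY Q x y * margYZ Q y z / margY Q y) :=
    fun x y z => sub_nonneg.2
      (term_ge (h _) (le_margXY h x y z) (le_margYZ h x y z) (margXY_le_margY h x y))
  have hs : ∑ x, ∑ y, ∑ z, (Q (x, y, z) * Real.log (Q (x, y, z) * margY Q y /
      (margXY Q x y * margYZ Q y z)) - (Q (x, y, z) - margXY Q x y * margYZ Q y z / margY Q y))
      = 0 := by
    simp only [Finset.sum_sub_distrib, sum_indep, sub_self, sub_zero]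
    exact h0
  have h1 := (Finset.sum_eq_zero_iff_of_nonneg fun x _ => Finset.sum_nonneg fun y _ =>
    Finset.sum_nonneg fun z _ => hle x y z).1 hs x (Finset.mem_univ x)
  have h2 := (Finset.sum_eq_zero_iff_of_nonneg fun y _ =>
    Finset.sum_nonneg fun z _ => hle x y z).1 h1 y (Finset.mem_univ y)
  have h3 := (Finset.sum_eq_zero_iff_of_nonneg fun z _ => hle x y z).1 h2 z (Finset.mem_univ z)
  exact term_eq (h _) (le_margXY h x y z) (le_margYZ h x y z) (margXY_le_margY h x y)
    (sub_eq_zero.1 h3)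

/-! ### The minimum over `Δ_P` is attained -/

lemma term_split {q m a b : ℝ} (hq : 0 ≤ q) (hqa : q ≤ a) (hqb : q ≤ b) (ham : a ≤ m) :
    q * Real.log (q * m / (a * b)) =
      q * Real.log q + q * Real.log m - q * Real.log a - q * Real.log b := by
  rcases hq.eq_or_lt with rfl | hq
  · simp
  · have ha : 0 < a := by linarith
    have hb : 0 < b := by linarith
    have hm : 0 < m := by linarith
    rw [Real.log_div (by positivity) (by positivity), Real.log_mul (by positivity) (by positivity),
      Real.log_mul (by positivity) (by positivity)]
    ring

/-- `MI(X:Z|Y)` as a signed sum of entropies; unlike the defining formula, the right-hand side is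
visibly continuous at distributions with zeros. -/
lemma miXZ_Y_eq {Q : 𝒳 × 𝒴 × 𝒵 → ℝ} (h : ∀ p, 0 ≤ Q p) :
    miXZ_Y Q = (∑ x, ∑ y, ∑ z, Q (x, y, z) * Real.log (Q (x, y, z)))
      + (∑ y, margY Q y * Real.log (margY Q y))
      - (∑ x, ∑ y, margXY Q x y * Real.log (margXY Q x y))
      - (∑ y, ∑ z, margYZ Q y z * Real.log (margYZ Q y z)) := by
  have h1 : miXZ_Y Q = ∑ x, ∑ y, ∑ z, (Q (x, y, z) * Real.log (Q (x, y, z))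
      + Q (x, y, z) * Real.log (margY Q y) - Q (x, y, z) * Real.log (margXY Q x y)
      - Q (x, y, z) * Real.log (margYZ Q y z)) :=
    Finset.sum_congr rfl fun x _ => Finset.sum_congr rfl fun y _ => Finset.sum_congr rfl fun z _ =>
      term_split (h _) (le_margXY h x y z) (le_margYZ h x y z) (margXY_le_margY h x y)
  have hY : ∑ x, ∑ y, ∑ z, Q (x, y, z) * Real.log (margY Q y)
      = ∑ y, margY Q y * Real.log (margY Q y) := by
    rw [Finset.sum_comm]
    refine Finset.sum_congr rfl fun y _ => ?_
    simp only [← Finset.sum_mul]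
    rfl
  have hXY : ∑ x, ∑ y, ∑ z, Q (x, y, z) * Real.log (margXY Q x y)
      = ∑ x, ∑ y, margXY Q x y * Real.log (margXY Q x y) := by
    simp only [← Finset.sum_mul]
    rfl
  have hYZ : ∑ x, ∑ y, ∑ z, Q (x, y, z) * Real.log (margYZ Q y z)
      = ∑ y, ∑ z, margYZ Q y z * Real.log (margYZ Q y z) := by
    rw [Finset.sum_comm]
    refine Finset.sum_congr rfl fun y _ => ?_
    rw [Finset.sum_comm]
    refine Finset.sum_congr rfl fun z _ => ?_
    rw [← Finset.sum_mul]
    rfl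
  rw [h1]
  simp only [Finset.sum_sub_distrib, Finset.sum_add_distrib]
  rw [hY, hXY, hYZ]

lemma continuousOn_miXZ_Y (P : 𝒳 × 𝒴 × 𝒵 → ℝ) : ContinuousOn miXZ_Y (ΔP P) := by
  have hc : Continuous fun Q : 𝒳 × 𝒴 × 𝒵 → ℝ =>
      (∑ x, ∑ y, ∑ z, Q (x, y, z) * Real.log (Q (x, y, z)))
      + (∑ y, margY Q y * Real.log (margY Q y))
      - (∑ x, ∑ y, margXY Q x y * Real.log (margXY Q x y))
      - (∑ y, ∑ z, margYZ Q y z * Real.log (margYZ Q y z)) := by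
    have hl := Real.continuous_mul_log
    refine ((Continuous.add ?_ ?_).sub ?_).sub ?_
    · exact continuous_finsetSum _ fun x _ => continuous_finsetSum _ fun y _ =>
        continuous_finsetSum _ fun z _ => hl.comp (continuous_apply (x, y, z))
    · refine continuous_finsetSum _ fun y _ =>
        hl.comp (g := fun t : ℝ => t * Real.log t) (f := fun Q : 𝒳 × 𝒴 × 𝒵 → ℝ => margY Q y) ?_
      unfold margY
      fun_prop
    · refine continuous_finsetSum _ fun x _ => continuous_finsetSum _ fun y _ =>
        hl.comp (g := fun t : ℝ => t * Real.log t) (f := fun Q : 𝒳 × 𝒴 × 𝒵 → ℝ => margXY Q x y) ?_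
      unfold margXY
      fun_prop
    · refine continuous_finsetSum _ fun y _ => continuous_finsetSum _ fun z _ =>
        hl.comp (g := fun t : ℝ => t * Real.log t) (f := fun Q : 𝒳 × 𝒴 × 𝒵 → ℝ => margYZ Q y z) ?_
      unfold margYZ
      fun_prop
  exact hc.continuousOn.congr fun Q hQ => miXZ_Y_eq hQ.1.1

lemma isCompact_ΔP (P : 𝒳 × 𝒴 × 𝒵 → ℝ) : IsCompact (ΔP P) := by
  have h1 : ΔP P = stdSimplex ℝ (𝒳 × 𝒴 × 𝒵) ∩
      ({Q | ∀ x y, margXY Q x y = margXY P x y} ∩ {Q | ∀ x z, margXZ Q x z = margXZ P x z}) := rfl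
  rw [h1]
  refine (isCompact_stdSimplex ℝ _).inter_right (IsClosed.inter ?_ ?_)
  · simp only [Set.ofPred_forall]
    refine isClosed_iInter fun x => isClosed_iInter fun y => isClosed_eq ?_ continuous_const
    unfold margXY
    fun_prop
  · simp only [Set.ofPred_forall]
    refine isClosed_iInter fun x => isClosed_iInter fun z => isClosed_eq ?_ continuous_const
    unfold margXZ
    fun_prop

/-! ### Vanishing unique information and garblings -/

lemma garbled_of_UIZ_eq_zero [Nonempty 𝒵] {P : 𝒳 × 𝒴 × 𝒵 → ℝ} (hP : IsDist P)
    (h : UIZ P = 0) : Garbled P := by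
  have hne : (ΔP P).Nonempty := ⟨P, hP, fun _ _ => rfl, fun _ _ => rfl⟩
  obtain ⟨Q, hQ, hQ0⟩ := (isCompact_ΔP P).exists_sInf_image_eq hne (continuousOn_miXZ_Y P)
  have hmi : miXZ_Y Q = 0 := hQ0.symm.trans h
  have hn := hQ.1.1
  have hfac := eq_of_miXZ_Y_eq_zero hn hmi
  -- The conditional law of `Z` given `Y` under `Q`; uniform where `Y = y` has probability zero.
  refine ⟨fun y z => if margY Q y = 0 then (Fintype.card 𝒵 : ℝ)⁻¹ else margYZ Q y z / margY Q y,
    fun y z => ?_, fun y => ?_, fun x z => ?_⟩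
  · dsimp only
    split_ifs
    · positivity
    · exact div_nonneg (margYZ_nonneg hn y z) (margY_nonneg hn y)
  · by_cases hy : margY Q y = 0
    · simp [hy]
    · simp only [hy, if_false]
      rw [← Finset.sum_div, ← margY_eq, div_self hy]
  · rw [← hQ.2.2 x z]
    refine Finset.sum_congr rfl fun y _ => ?_
    rw [← hQ.2.1 x y, hfac x y z]
    by_cases hy : margY Q y = 0
    · have : margXY Q x y = 0 :=
        le_antisymm (hy ▸ margXY_le_margY hn x y) (margXY_nonneg hn x y)
      simp [this]
    · simp only [hy, if_false]
      rw [mul_div_assoc]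

lemma UIZ_eq_zero_of_garbled {P : 𝒳 × 𝒴 × 𝒵 → ℝ} (hP : IsDist P) (h : Garbled P) :
    UIZ P = 0 := by
  obtain ⟨g, hg0, hg1, hg⟩ := h
  -- The Markov chain `X → Y → Z` with transition matrix `g` from `Y` to `Z`.
  let Q : 𝒳 × 𝒴 × 𝒵 → ℝ := fun p => margXY P p.1 p.2.1 * g p.2.1 p.2.2
  have hXY : ∀ x y, margXY Q x y = margXY P x y := fun x y => by
    change ∑ z, margXY P x y * g y z = _
    rw [← Finset.mul_sum, hg1, mul_one]
  have hYZ : ∀ y z, margYZ Q y z = margY P y * g y z := fun y z => by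
    change ∑ x, margXY P x y * g y z = _
    rw [← Finset.sum_mul]
    rfl
  have hY : ∀ y, margY Q y = margY P y := fun y => by
    rw [margY_eq]
    simp only [hYZ]
    rw [← Finset.mul_sum, hg1, mul_one]
  have hQ : Q ∈ ΔP P := by
    refine ⟨⟨fun p => mul_nonneg (margXY_nonneg hP.1 _ _) (hg0 _ _), ?_⟩, hXY,
      fun x z => (hg x z).symm⟩
    rw [← hP.2]
    simp only [Fintype.sum_prod_type]
    exact Finset.sum_congr rfl fun x _ => Finset.sum_congr rfl fun y _ => hXY x y
  have hmi : miXZ_Y Q = 0 := by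
    refine Finset.sum_eq_zero fun x _ => Finset.sum_eq_zero fun y _ =>
      Finset.sum_eq_zero fun z _ => ?_
    rw [hXY, hYZ, hY]
    change margXY P x y * g y z * Real.log (margXY P x y * g y z * margY P y /
      (margXY P x y * (margY P y * g y z))) = 0
    rw [show margXY P x y * (margY P y * g y z) = margXY P x y * g y z * margY P y by ring]
    by_cases h0 : margXY P x y * g y z * margY P y = 0 <;> simp [h0]
  have hb : ∀ r ∈ miXZ_Y '' ΔP P, 0 ≤ r := by
    rintro _ ⟨Q', hQ', rfl⟩
    exact miXZ_Y_nonneg hQ'.1.1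
  exact le_antisymm (csInf_le ⟨0, hb⟩ ⟨Q, hQ, hmi⟩) (Real.sInf_nonneg hb)

/-! ### Blackwell's theorem -/

lemma reward_le_of_garbled {P : 𝒳 × 𝒴 × 𝒵 → ℝ} (h : Garbled P)
    (𝒜 : Type) [Fintype 𝒜] [Nonempty 𝒜] (u : 𝒳 × 𝒜 → ℝ) :
    (∑ z, ⨆ a : 𝒜, ∑ x, margXZ P x z * u (x, a)) ≤
      ∑ y, ⨆ a : 𝒜, ∑ x, margXY P x y * u (x, a) := by
  obtain ⟨g, hg0, hg1, hg⟩ := h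
  have key : ∀ z, (⨆ a : 𝒜, ∑ x, margXZ P x z * u (x, a)) ≤
      ∑ y, g y z * ⨆ a : 𝒜, ∑ x, margXY P x y * u (x, a) := by
    intro z
    refine ciSup_le fun a => ?_
    have : ∑ x, margXZ P x z * u (x, a) = ∑ y, g y z * ∑ x, margXY P x y * u (x, a) := by
      simp only [hg, Finset.sum_mul, Finset.mul_sum]
      rw [Finset.sum_comm]
      exact Finset.sum_congr rfl fun y _ => Finset.sum_congr rfl fun x _ => by ring
    rw [this]
    exact Finset.sum_le_sum fun y _ => mul_le_mul_of_nonneg_left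
      (le_ciSup (f := fun a => ∑ x, margXY P x y * u (x, a)) (Set.finite_range _).bddAbove a)
      (hg0 y z)
  refine (Finset.sum_le_sum fun z _ => key z).trans_eq ?_
  rw [Finset.sum_comm]
  exact Finset.sum_congr rfl fun y _ => by rw [← Finset.sum_mul, hg1, one_mul]

/-- The harder half of Blackwell's theorem. The action set only needs to be `𝒵` itself. -/
lemma garbled_of_reward_le [Nonempty 𝒵] {P : 𝒳 × 𝒴 × 𝒵 → ℝ}
    (h : ∀ u : 𝒳 × 𝒵 → ℝ, (∑ z, ⨆ a : 𝒵, ∑ x, margXZ P x z * u (x, a)) ≤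
      ∑ y, ⨆ a : 𝒵, ∑ x, margXY P x y * u (x, a)) : Garbled P := by
  classical
  let T : (𝒴 → 𝒵 → ℝ) →ₗ[ℝ] (𝒳 × 𝒵 → ℝ) :=
    { toFun := fun g p => ∑ y, margXY P p.1 y * g y p.2
      map_add' := fun g g' => by
        ext p
        simp [mul_add, Finset.sum_add_distrib]
      map_smul' := fun c g => by
        ext p
        simp only [Pi.smul_apply, smul_eq_mul, RingHom.id_apply, Finset.mul_sum]
        exact Finset.sum_congr rfl fun y _ => by ring }
  have hT : ∀ g p, T g p = ∑ y, margXY P p.1 y * g y p.2 := fun _ _ => rfl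
  let K : Set (𝒴 → 𝒵 → ℝ) := Set.pi Set.univ fun _ => stdSimplex ℝ 𝒵
  have hKc : Convex ℝ K := convex_pi fun _ _ => convex_stdSimplex ℝ 𝒵
  have hKk : IsCompact K := isCompact_univ_pi fun _ => isCompact_stdSimplex ℝ 𝒵
  let v : 𝒳 × 𝒵 → ℝ := fun p => margXZ P p.1 p.2
  by_cases hv : v ∈ T '' K
  · obtain ⟨g, hg, hgv⟩ := hv
    exact ⟨g, fun y => (hg y trivial).1, fun y => (hg y trivial).2,
      fun x z => (congrFun hgv (x, z)).symm⟩
  exfalso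
  obtain ⟨f, c, hf, hfv⟩ := geometric_hahn_banach_closed_point (hKc.linear_image T)
    (hKk.image T.continuous_of_finiteDimensional).isClosed hv
  -- The separating functional is read as a reward function.
  let u : 𝒳 × 𝒵 → ℝ := fun p => f fun q => if p = q then 1 else 0
  have hfu : ∀ w, f w = ∑ x, ∑ z, w (x, z) * u (x, z) := fun w => by
    rw [← Fintype.sum_prod_type (f := fun p => w p * u p)]
    exact LinearMap.pi_apply_eq_sum_univ (f : (𝒳 × 𝒵 → ℝ) →ₗ[ℝ] ℝ) w
  -- The garbling that answers `y` by an optimal action attains the reward of `κ`.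
  choose s hs using fun y => exists_eq_ciSup_of_finite
    (f := fun a : 𝒵 => ∑ x, margXY P x y * u (x, a))
  have hg : (fun y => Pi.single (s y) 1 : 𝒴 → 𝒵 → ℝ) ∈ K :=
    fun y _ => single_mem_stdSimplex ℝ (s y)
  have h1 := hf _ ⟨_, hg, rfl⟩
  have h2 : f (T fun y => Pi.single (s y) 1) = ∑ y, ⨆ a : 𝒵, ∑ x, margXY P x y * u (x, a) := by
    rw [hfu]
    simp only [hT, ← hs, Finset.sum_mul]
    conv_rhs => rw [Finset.sum_comm]
    refine Finset.sum_congr rfl fun x _ => ?_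
    rw [Finset.sum_comm]
    exact Finset.sum_congr rfl fun y _ => by simp [Pi.single_apply]
  have h3 : f v ≤ ∑ z, ⨆ a : 𝒵, ∑ x, margXZ P x z * u (x, a) := by
    rw [hfu, Finset.sum_comm]
    exact Finset.sum_le_sum fun z _ => le_ciSup
      (f := fun a => ∑ x, margXZ P x z * u (x, a)) (Set.finite_range _).bddAbove z
  linarith [h u]

/-- `ŨI(X:Z∖Y) = 0` iff every decision problem is solved at least as well
through the channel `κ` (to `Y`) as through the channel `μ` (to `Z`). -/
theorem stmt5 [Nonempty 𝒳] [Nonempty 𝒴] [Nonempty 𝒵]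
    (P : 𝒳 × 𝒴 × 𝒵 → ℝ) (hP : IsDist P) (hsupp : ∀ x, 0 < margX P x) :
    UIZ P = 0 ↔
      ∀ (𝒜 : Type) [Fintype 𝒜] [Nonempty 𝒜] (u : 𝒳 × 𝒜 → ℝ),
        (∑ z, ⨆ a : 𝒜, ∑ x, margX P x * (margXZ P x z / margX P x) * u (x, a)) ≤
        (∑ y, ⨆ a : 𝒜, ∑ x, margX P x * (margXY P x y / margX P x) * u (x, a)) := by
  have hc : ∀ x (r : ℝ), margX P x * (r / margX P x) = r :=
    fun x r => mul_div_cancel₀ r (hsupp x).ne'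
  simp only [hc]
  constructor
  · intro h 𝒜 _ _ u
    exact reward_le_of_garbled (garbled_of_UIZ_eq_zero hP h) 𝒜 u
  · intro h
    refine UIZ_eq_zero_of_garbled hP (garbled_of_reward_le fun u => ?_)
    -- Actions live in `Type`, so `𝒵` is replaced by a copy of itself in that universe.
    let e := Fintype.equivFin 𝒵
    have : Nonempty (Fin (Fintype.card 𝒵)) := e.nonempty_congr.1 inferInstance
    have h1 := h (Fin (Fintype.card 𝒵)) fun p => u (p.1, e.symm p.2)
    have hr : ∀ w : 𝒵 → ℝ, (⨆ i, w (e.symm i)) = ⨆ a, w a := fun w => e.symm.iSup_comp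
    have hZ := fun z => hr fun a => ∑ x, margXZ P x z * u (x, a)
    have hY := fun y => hr fun a => ∑ x, margXY P x y * u (x, a)
    simp only at h1 hZ hY
    simpa only [hZ, hY] using h1

end PID
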